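/- Let α : ℝ^n → ℝ be locally log-Hölder continuous and let 0 < q < ∞. Then there exists a constant c > 0 such that for every complex sequence λ = {λ_{v,m}}_{v∈ℕ₀,m∈ℤ^n} with ‖λ‖_{f^{α(·)}_{∞,q}} < ∞, there exists a collection {E_{v,m}}_{v∈ℕ₀,m∈ℤ^n} of measurable sets with E_{v,m} ⊂ Q_{v,m}, |E_{v,m}| > |Q_{v,m}|/2 for all v, m, and ‖ (∑_{v=0}^∞ ∑_{m∈ℤ^n} 2^{v(α(·)+n/2)q} |λ_{v,m}|^q χ_{E_{v,m}})^{1/q} ‖_{L^∞} ≤ c ‖λ‖_{f^{α(·)}_{∞,q}}. -/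

import Mathlib

open MeasureTheory ENNReal Real Set

noncomputable section

/-- Euclidean space ℝ^n. -/
abbrev En (n : ℕ) := EuclideanSpace ℝ (Fin n)

/-- `g` is locally log-Hölder continuous with constant `c`. -/
def LocLogHolder {n : ℕ} (c : ℝ) (g : En n → ℝ) : Prop :=
  0 < c ∧ ∀ x y : En n, |g x - g y| ≤ c / Real.log (Real.exp 1 + 1 / ‖x - y‖)

/-- `g` is globally log-Hölder continuous with local constant `c`. -/
def GlobLogHolder {n : ℕ} (c : ℝ) (g : En n → ℝ) : Prop :=
  LocLogHolder c g ∧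
    ∃ (gi cd : ℝ), 0 < cd ∧ ∀ x : En n, |g x - gi| ≤ cd / Real.log (Real.exp 1 + ‖x‖)

/-- The kernel η_{v,h}(x) = 2^{nv} (1 + 2^v |x|)^{-h}. -/
def eta (n : ℕ) (v : ℕ) (h : ℝ) (x : En n) : ℝ :=
  (2 : ℝ) ^ (n * v) * (1 + (2 : ℝ) ^ v * ‖x‖) ^ (-h)

/-- The dyadic cube Q_{v,m}. -/
def dyadicCube (n : ℕ) (v : ℤ) (m : Fin n → ℤ) : Set (En n) :=
  {x | ∀ i, (m i : ℝ) ≤ (2 : ℝ) ^ v * x i ∧ (2 : ℝ) ^ v * x i < m i + 1}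

/-- Luxemburg (quasi-)norm of an ℝ≥0∞-valued function with variable exponent `p`. -/
def luxNorm {n : ℕ} (p : En n → ℝ) (F : En n → ℝ≥0∞) : ℝ≥0∞ :=
  sInf {c : ℝ≥0∞ | 0 < c ∧ ∫⁻ x, (F x / c) ^ p x ≤ 1}

/-- The mixed Lebesgue-sequence space norm ‖(F_v)_v‖_{L^{p(·)}(ℓ_{q(·)})}. -/
def mixedNorm {n : ℕ} (p q : En n → ℝ) (F : ℕ → En n → ℝ≥0∞) : ℝ≥0∞ :=
  luxNorm p fun x => (∑' v : ℕ, F v x ^ q x) ^ (1 / q x)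

/-- The sequence space norm ‖λ‖_{f^{α(·)}_{p(·),q(·)}}. -/
def seqNorm {n : ℕ} (α p q : En n → ℝ) (lam : ℕ → (Fin n → ℤ) → ℂ) : ℝ≥0∞ :=
  mixedNorm p q fun v x =>
    ∑' m : Fin n → ℤ,
      ENNReal.ofReal ((2 : ℝ) ^ ((v : ℝ) * (α x + n / 2)) * ‖lam v m‖) *
        (dyadicCube n (v : ℤ) m).indicator (fun _ => (1 : ℝ≥0∞)) x

/-- The sequence space norm ‖λ‖_{f^{α(·)}_{∞,q}}. -/
def seqNormInf {n : ℕ} (α : En n → ℝ) (q : ℝ) (lam : ℕ → (Fin n → ℤ) → ℂ) : ℝ≥0∞ :=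
  ⨆ (vQ : ℤ) (mQ : Fin n → ℤ),
    volume (dyadicCube n vQ mQ) ^ (-(1 / q)) *
      (∑' v : ℕ, if vQ ≤ (v : ℤ) then
          ∫⁻ x in dyadicCube n vQ mQ,
            ∑' m : Fin n → ℤ,
              ENNReal.ofReal ((2 : ℝ) ^ ((v : ℝ) * (α x + n / 2) * q) * ‖lam v m‖ ^ q) *
                (dyadicCube n (v : ℤ) m).indicator (fun _ => (1 : ℝ≥0∞)) x
        else 0) ^ (1 / q)

/-- The Calderón product (quasi-)norm associated to two sequence space norms. -/
def calderonNorm {n : ℕ} (N0 N1 : (ℕ → (Fin n → ℤ) → ℂ) → ℝ≥0∞) (θ : ℝ)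
    (lam : ℕ → (Fin n → ℤ) → ℂ) : ℝ≥0∞ :=
  sInf {M : ℝ≥0∞ | ∃ μ ν : ℕ → (Fin n → ℤ) → ℂ, N0 μ ≤ 1 ∧ N1 ν ≤ 1 ∧
    ∀ v m, ENNReal.ofReal ‖lam v m‖ ≤
      M * ENNReal.ofReal ‖μ v m‖ ^ (1 - θ) * ENNReal.ofReal ‖ν v m‖ ^ θ}

/-!
Let `S_k` be the sum of the level functions of levels `v ≥ k`, and `N` the norm of `λ`. On a cube of
level `k` the mean of `S_k` is at most `N ^ q`, so `S_k ≤ 2 N ^ q` on more than half of the cube;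
this set, up to a null set, is `E_{k,m}`. At a fixed point `x` only levels `v` with
`S_v(x) ≤ 2 N ^ q` survive, and the terms of finitely many of them add up to at most the tail sum
from the least one, hence to at most `2 N ^ q`.
-/

section TailSum

variable {ι : Type*} [Preorder ι]

/-- The sum of the terms `f i` with `k ≤ i`. The full index type is kept as the domain of summation,
as in `seqNormInf`. -/
def tailSum (f : ι → ℝ≥0∞) (k : ι) : ℝ≥0∞ :=
  ∑' i, (Ici k).indicator f i

theorem sum_le_tailSum {s : Finset ι} {k : ι} (hk : ∀ i ∈ s, k ≤ i) (f : ι → ℝ≥0∞) :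
    ∑ i ∈ s, f i ≤ tailSum f k :=
  calc ∑ i ∈ s, f i = ∑ i ∈ s, (Ici k).indicator f i :=
        Finset.sum_congr rfl fun i hi => (indicator_of_mem (mem_Ici.2 (hk i hi)) f).symm
    _ ≤ tailSum f k := ENNReal.sum_le_tsum s

theorem tsum_indicator_tailSum_le {κ : Type*} [LinearOrder κ] (f : κ → ℝ≥0∞) (M : ℝ≥0∞) :
    ∑' i, {k | tailSum f k ≤ M}.indicator f i ≤ M := by
  classical
  refine ENNReal.summable.tsum_le_of_sum_le fun s => ?_
  simp only [indicator_apply, mem_ofPred_eq, ← Finset.sum_filter]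
  set t := s.filter fun k => tailSum f k ≤ M
  rcases t.eq_empty_or_nonempty with ht | ht
  · simp [ht]
  · calc ∑ i ∈ t, f i ≤ tailSum f (t.min' ht) := sum_le_tailSum (fun i hi => t.min'_le i hi) f
      _ ≤ M := (Finset.mem_filter.1 (t.min'_mem ht)).2

variable {X : Type*} [MeasurableSpace X] {μ : Measure X} {f : ι → X → ℝ≥0∞}

theorem aemeasurable_indicator_Ici (hf : ∀ i, AEMeasurable (f i) μ) (k i : ι) :
    AEMeasurable (fun x => (Ici k).indicator (f · x) i) μ := by
  by_cases hi : i ∈ Ici k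
  · simpa only [indicator_of_mem hi] using hf i
  · simp only [indicator_of_notMem hi, aemeasurable_const]

variable [Countable ι]

theorem aemeasurable_tailSum (hf : ∀ i, AEMeasurable (f i) μ) (k : ι) :
    AEMeasurable (fun x => tailSum (f · x) k) μ :=
  AEMeasurable.tsum (aemeasurable_indicator_Ici hf k)

theorem lintegral_tailSum (hf : ∀ i, AEMeasurable (f i) μ) (k : ι) :
    ∫⁻ x, tailSum (f · x) k ∂μ = tailSum (fun i => ∫⁻ x, f i x ∂μ) k := by
  unfold tailSum
  rw [lintegral_tsum (aemeasurable_indicator_Ici hf k)]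
  refine tsum_congr fun i => ?_
  by_cases hi : i ∈ Ici k
  · simp only [indicator_of_mem hi]
  · simp only [indicator_of_notMem hi, lintegral_zero]

end TailSum

section Chebyshev

variable {X : Type*} [MeasurableSpace X] {μ : Measure X} {S : X → ℝ≥0∞} {M : ℝ≥0∞}

theorem mul_measure_gt_lt_lintegral (hS : AEMeasurable S μ) {a : ℝ≥0∞} (ha : a ≠ ∞)
    (h_zero : μ {x | a < S x} ≠ 0) (h_top : μ {x | a < S x} ≠ ∞) :
    a * μ {x | a < S x} < ∫⁻ x, S x ∂μ := by
  have hset : NullMeasurableSet {x | a < S x} μ := nullMeasurableSet_lt aemeasurable_const hS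
  rw [← lintegral_indicator_const₀ hset]
  refine lintegral_strict_mono_of_ae_le_of_ae_lt_on hS ?_ ?_ h_zero ?_
  · rw [lintegral_indicator_const₀ hset]
    finiteness
  · exact .of_forall (indicator_le fun x (hx : a < S x) => hx.le)
  · exact .of_forall fun x (hx : x ∈ {x | a < S x}) => (indicator_of_mem hx _).trans_lt hx

theorem half_measure_univ_le_of_measure_compl_le [IsFiniteMeasure μ] {A : Set X}
    (hA : NullMeasurableSet A μ) (h : μ Aᶜ ≤ μ univ / 2) : μ univ / 2 ≤ μ A := by
  refine ENNReal.le_of_add_le_add_right (measure_ne_top μ Aᶜ) ?_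
  calc μ univ / 2 + μ Aᶜ ≤ μ univ / 2 + μ univ / 2 := by gcongr
    _ = μ A + μ Aᶜ := by rw [ENNReal.add_halves, measure_add_measure_compl₀ hA]

theorem half_measure_univ_lt_measure_le [IsFiniteMeasure μ] [NeZero μ] (hS : AEMeasurable S μ)
    (hM : ∫⁻ x, S x ∂μ ≤ M * μ univ) : μ univ / 2 < μ {x | S x ≤ 2 * M} := by
  have hcompl : {x | S x ≤ 2 * M} = {x | 2 * M < S x}ᶜ := by
    simp only [compl_ofPred, not_lt]
  rw [hcompl]
  by_contra! hle
  have bad_large : μ univ / 2 ≤ μ {x | 2 * M < S x} :=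
    half_measure_univ_le_of_measure_compl_le (nullMeasurableSet_lt aemeasurable_const hS) hle
  have bad_ne_zero : μ {x | 2 * M < S x} ≠ 0 :=
    ((ENNReal.half_pos (Measure.measure_univ_ne_zero.2 (NeZero.ne μ))).trans_le bad_large).ne'
  have M_ne_top : M ≠ ∞ := by
    rintro rfl
    simp at bad_ne_zero
  refine (mul_measure_gt_lt_lintegral hS (by finiteness) bad_ne_zero
    (measure_ne_top μ _)).not_ge ?_
  calc ∫⁻ x, S x ∂μ ≤ M * μ univ := hM
    _ = 2 * M * (μ univ / 2) := by
      rw [mul_comm 2 M, mul_assoc, ENNReal.mul_div_cancel two_ne_zero ofNat_ne_top]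
    _ ≤ 2 * M * μ {x | 2 * M < S x} := by gcongr

theorem exists_measurableSet_subset_half_measure_lt {Q : Set X} (hQ : MeasurableSet Q)
    (hQ_zero : μ Q ≠ 0) (hQ_top : μ Q ≠ ∞) (hS : AEMeasurable S (μ.restrict Q))
    (hM : ∫⁻ x in Q, S x ∂μ ≤ M * μ Q) :
    ∃ E, MeasurableSet E ∧ E ⊆ Q ∧ μ Q / 2 < μ E ∧ ∀ x ∈ E, S x ≤ 2 * M := by
  have : IsFiniteMeasure (μ.restrict Q) := isFiniteMeasure_restrict.2 hQ_top
  have : NeZero (μ.restrict Q) := ⟨mt Measure.restrict_eq_zero.1 hQ_zero⟩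
  obtain ⟨E, hE_le, hE, hE_ae⟩ :=
    (nullMeasurableSet_le hS (aemeasurable_const (b := 2 * M))).exists_measurable_subset_ae_eq
  refine ⟨E ∩ Q, hE.inter hQ, inter_subset_right, ?_, fun x hx => hE_le hx.1⟩
  have hlt := half_measure_univ_lt_measure_le hS (by rwa [Measure.restrict_apply_univ])
  rwa [← measure_congr hE_ae, Measure.restrict_apply_univ, Measure.restrict_apply hE] at hlt

end Chebyshev

theorem le_rpow_mul_of_rpow_mul_rpow_le {w I N : ℝ≥0∞} {q : ℝ} (hq : 0 < q) (hw_zero : w ≠ 0)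
    (hw_top : w ≠ ∞) (h : w ^ (-(1 / q)) * I ^ (1 / q) ≤ N) : I ≤ N ^ q * w := by
  rw [ENNReal.rpow_neg, ← ENNReal.inv_rpow, ← ENNReal.mul_rpow_of_nonneg _ _ (by positivity),
    one_div, ENNReal.rpow_inv_le_iff hq, mul_comm, ← div_eq_mul_inv] at h
  exact (ENNReal.div_le_iff hw_zero hw_top).1 h

open Filter Topology in
theorem LocLogHolder.continuous {n : ℕ} {c : ℝ} {α : En n → ℝ} (hα : LocLogHolder c α) :
    Continuous α := by
  refine continuous_iff_continuousAt.2 fun y => continuousAt_iff_punctured_nhds.2 ?_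
  have hinv : Tendsto (fun x => 1 / ‖x - y‖) (𝓝[≠] y) atTop := by
    simpa only [one_div, Function.comp_def] using
      tendsto_inv_nhdsGT_zero.comp (tendsto_norm_sub_self_nhdsNE y)
  have hmodulus : Tendsto (fun x => c / Real.log (Real.exp 1 + 1 / ‖x - y‖)) (𝓝[≠] y) (𝓝 0) :=
    (Real.tendsto_log_atTop.comp (tendsto_atTop_add_const_left _ _ hinv)).const_div_atTop c
  exact tendsto_iff_dist_tendsto_zero.2
    (squeeze_zero (fun _ => dist_nonneg) (fun x => hα.2 x y) hmodulus)

section DyadicCube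

variable (n : ℕ) (v : ℤ) (m : Fin n → ℤ)

theorem dyadicCube_eq_preimage_pi_Ico : dyadicCube n v m =
    WithLp.ofLp ⁻¹' univ.pi fun i => Ico ((m i : ℝ) / 2 ^ v) ((m i + 1) / 2 ^ v) := by
  have hpow : (0 : ℝ) < 2 ^ v := by positivity
  ext x
  simp only [dyadicCube, mem_ofPred_eq, mem_preimage, mem_univ_pi, mem_Ico, div_le_iff₀' hpow,
    lt_div_iff₀' hpow]

theorem measurableSet_dyadicCube : MeasurableSet (dyadicCube n v m) := by
  rw [dyadicCube_eq_preimage_pi_Ico]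
  exact (PiLp.volume_preserving_ofLp (Fin n)).measurable
    (.univ_pi fun _ => measurableSet_Ico)

theorem volume_dyadicCube : volume (dyadicCube n v m) = ENNReal.ofReal (2 ^ v)⁻¹ ^ n := by
  rw [dyadicCube_eq_preimage_pi_Ico, (PiLp.volume_preserving_ofLp (Fin n)).measure_preimage
    (MeasurableSet.univ_pi fun _ => measurableSet_Ico).nullMeasurableSet, Real.volume_pi_Ico]
  simp only [← sub_div, add_sub_cancel_left, one_div, Finset.prod_const, Finset.card_univ,
    Fintype.card_fin]

theorem volume_dyadicCube_ne_zero : volume (dyadicCube n v m) ≠ 0 := by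
  rw [volume_dyadicCube]
  exact pow_ne_zero n (ENNReal.ofReal_ne_zero_iff.2 (by positivity))

theorem volume_dyadicCube_ne_top : volume (dyadicCube n v m) ≠ ∞ := by
  rw [volume_dyadicCube]
  finiteness

end DyadicCube

section LevelSum

variable {n : ℕ} {α : En n → ℝ} {q : ℝ} {lam : ℕ → (Fin n → ℤ) → ℂ}

/-- The level-`v` function `∑_m 2^{v(α(x)+n/2)q} |λ_{v,m}|^q χ_{A_{v,m}}(x)`. The sets `A v m` are a
parameter so that it covers both the dyadic cubes of `seqNormInf` and their chosen subsets. -/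
def levelSum (α : En n → ℝ) (q : ℝ) (lam : ℕ → (Fin n → ℤ) → ℂ)
    (A : ℕ → (Fin n → ℤ) → Set (En n)) (v : ℕ) (x : En n) : ℝ≥0∞ :=
  ∑' m : Fin n → ℤ,
    ENNReal.ofReal ((2 : ℝ) ^ ((v : ℝ) * (α x + n / 2) * q) * ‖lam v m‖ ^ q) *
      (A v m).indicator (fun _ => (1 : ℝ≥0∞)) x

/-- The level functions of the dyadic cubes, whose mean tail sums define `seqNormInf`. -/
abbrev cubeLevelSum (α : En n → ℝ) (q : ℝ) (lam : ℕ → (Fin n → ℤ) → ℂ) :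
    ℕ → En n → ℝ≥0∞ :=
  levelSum α q lam fun v m => dyadicCube n v m

theorem aemeasurable_levelSum (hα : AEMeasurable α) {A : ℕ → (Fin n → ℤ) → Set (En n)} {v : ℕ}
    (hA : ∀ m, MeasurableSet (A v m)) : AEMeasurable (levelSum α q lam A v) := by
  refine AEMeasurable.tsum fun m => ?_
  exact AEMeasurable.mul (by fun_prop) (aemeasurable_const.indicator (hA m))

theorem aemeasurable_cubeLevelSum (hα : AEMeasurable α) (v : ℕ) :
    AEMeasurable (cubeLevelSum α q lam v) :=
  aemeasurable_levelSum hα fun m => measurableSet_dyadicCube n v m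

theorem levelSum_le_indicator {A B : ℕ → (Fin n → ℤ) → Set (En n)} {v : ℕ} {x : En n} {K : Set ℕ}
    (hAB : ∀ m, A v m ⊆ B v m) (hK : ∀ m, x ∈ A v m → v ∈ K) :
    levelSum α q lam A v x ≤ K.indicator (fun w => levelSum α q lam B w x) v := by
  by_cases hv : v ∈ K
  · rw [indicator_of_mem hv]
    refine ENNReal.tsum_le_tsum fun m => ?_
    gcongr
    exact hAB m
  · have hx : ∀ m, x ∉ A v m := fun m hm => hv (hK m hm)
    simp [levelSum, hx]

theorem rpow_mul_tailSum_le_seqNormInf (k : ℕ) (m : Fin n → ℤ) :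
    volume (dyadicCube n k m) ^ (-(1 / q)) *
      tailSum (fun v => ∫⁻ x in dyadicCube n k m, cubeLevelSum α q lam v x) k ^ (1 / q) ≤
      seqNormInf α q lam := by
  refine le_trans (le_of_eq ?_) (le_iSup₂ (k : ℤ) m)
  simp only [tailSum, indicator_apply, mem_Ici, Nat.cast_le, levelSum]

theorem setLIntegral_tailSum_le (hα : AEMeasurable α) (hq : 0 < q) (k : ℕ) (m : Fin n → ℤ) :
    ∫⁻ x in dyadicCube n k m, tailSum (fun v => cubeLevelSum α q lam v x) k ≤
      seqNormInf α q lam ^ q * volume (dyadicCube n k m) := by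
  rw [lintegral_tailSum fun v => (aemeasurable_cubeLevelSum hα v).restrict]
  exact le_rpow_mul_of_rpow_mul_rpow_le hq (volume_dyadicCube_ne_zero n k m)
    (volume_dyadicCube_ne_top n k m) (rpow_mul_tailSum_le_seqNormInf k m)

end LevelSum

theorem stmt6_general {n : ℕ} {α : En n → ℝ} (hα : AEMeasurable α) {q : ℝ} (hq : 0 < q)
    (lam : ℕ → (Fin n → ℤ) → ℂ) :
    ∃ E : ℕ → (Fin n → ℤ) → Set (En n),
      (∀ (v : ℕ) (m : Fin n → ℤ), MeasurableSet (E v m) ∧ E v m ⊆ dyadicCube n (v : ℤ) m ∧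
        volume (dyadicCube n (v : ℤ) m) / 2 < volume (E v m)) ∧
      ∀ x, (∑' v, levelSum α q lam E v x) ^ (1 / q) ≤
        ENNReal.ofReal (2 ^ (1 / q)) * seqNormInf α q lam := by
  choose E hE_meas hE_sub hE_half hE_tail using fun (k : ℕ) (m : Fin n → ℤ) =>
    exists_measurableSet_subset_half_measure_lt (measurableSet_dyadicCube n k m)
      (volume_dyadicCube_ne_zero n k m) (volume_dyadicCube_ne_top n k m)
      (aemeasurable_tailSum (aemeasurable_cubeLevelSum hα) k).restrict
      (setLIntegral_tailSum_le (lam := lam) hα hq k m)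
  refine ⟨E, fun v m => ⟨hE_meas v m, hE_sub v m, hE_half v m⟩, fun x => ?_⟩
  have hsum : ∑' v, levelSum α q lam E v x ≤ 2 * seqNormInf α q lam ^ q :=
    (ENNReal.tsum_le_tsum fun v =>
      levelSum_le_indicator (hE_sub v) fun m hx => hE_tail v m x hx).trans
      (tsum_indicator_tailSum_le _ _)
  calc (∑' v, levelSum α q lam E v x) ^ (1 / q)
      ≤ (2 * seqNormInf α q lam ^ q) ^ (1 / q) := by gcongr
    _ = ENNReal.ofReal (2 ^ (1 / q)) * seqNormInf α q lam := by
      rw [ENNReal.mul_rpow_of_nonneg _ _ (by positivity), one_div, ENNReal.rpow_rpow_inv hq.ne',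
        ← ENNReal.ofReal_rpow_of_pos two_pos, ENNReal.ofReal_ofNat]

/-- the other direction of Proposition `prop1`: for any
`λ ∈ f^{α(·)}_{∞,q}` there are subsets `E_{v,m} ⊂ Q_{v,m}` with
`|E_{v,m}| > |Q_{v,m}|/2` so that the `L^∞` norm of the corresponding expression
is controlled by `‖λ‖_{f^{α(·)}_{∞,q}}`. -/
theorem stmt6 {n : ℕ} (α : En n → ℝ) (hα : ∃ c, LocLogHolder c α)
    (q : ℝ) (hq : 0 < q) :
    ∃ c : ℝ, 0 < c ∧ ∀ lam : ℕ → (Fin n → ℤ) → ℂ, seqNormInf α q lam ≠ ∞ →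
      ∃ E : ℕ → (Fin n → ℤ) → Set (En n),
        (∀ (v : ℕ) (m : Fin n → ℤ), MeasurableSet (E v m) ∧ E v m ⊆ dyadicCube n (v : ℤ) m ∧
          volume (dyadicCube n (v : ℤ) m) / 2 < volume (E v m)) ∧
        essSup (fun x =>
            (∑' (v : ℕ) (m : Fin n → ℤ),
              ENNReal.ofReal ((2 : ℝ) ^ ((v : ℝ) * (α x + n / 2) * q) * ‖lam v m‖ ^ q) *
                (E v m).indicator (fun _ => (1 : ℝ≥0∞)) x) ^ (1 / q)) volume ≤
          ENNReal.ofReal c * seqNormInf α q lam := by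
  obtain ⟨_, hα⟩ := hα
  refine ⟨2 ^ (1 / q), by positivity, fun lam _ => ?_⟩
  obtain ⟨E, hE, hle⟩ := stmt6_general hα.continuous.aemeasurable hq lam
  exact ⟨E, hE, essSup_le_of_ae_le _ (.of_forall hle)⟩
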